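/- Let (H, Σ, Υ, Φ) be a gluing data with parameters m, k ≥ 2 and (G_n)_{n≥0} a sequence with G_{n+1} = R(G_n); write (x)_n = Z_{G_n}(λ, x) for x ∈ {0,1}^k. Assume the point ((x)_n)_x lies on the invariant manifold, i.e., (x)_n/(0,…,0)_n = ∏_{j: x_j = 1} (e_j)_n/(0,…,0)_n for all x ∈ {0,1}^k. Then for every j ∈ {1,…,k}, writing e = Φ(j), ℓ = ℓ(e), and [y]_n = (y)_n/(0,…,0)_n, one has [e_j]_{n+1} = ( Σ_{Y_e} [e_ℓ]_n^{‖Y_e‖} · Z_{Σ_e}(λ, Y_e, e_j|_e)/λ^{‖Y_e‖} ) / ( Σ_{Y_e} [e_ℓ]_n^{‖Y_e‖} · Z_{Σ_e}(λ, Y_e, 0|_e)/λ^{‖Y_e‖} ), where Y_e ranges over all {0,1}-assignments to the vertices of the edge e, as an identity of rational functions in λ. In particular, the image under one recursion step of the invariant manifold lies in the submanifold that is a graph over the coordinates [e_ℓ] with ℓ in the image Λ({1,…,k}) of the label dynamics. -/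

import Mathlib

open scoped Classical
open Finset Filter

noncomputable section

/-- A finite multigraph: a finite vertex type together with a multiset of
(unordered) edges. -/
structure MGraph where
  V : Type
  fin : Fintype V
  E : Multiset (Sym2 V)

attribute [instance] MGraph.fin

namespace MGraph

/-- A `{0,1}`-vertex assignment is independent if no two vertices assigned `1`
form an edge. -/
def Indep (G : MGraph) (σ : G.V → Bool) : Prop :=
  ∀ v w : G.V, s(v, w) ∈ G.E → ¬(σ v = true ∧ σ w = true)

/-- The number of vertices assigned `1`. -/
def ones (G : MGraph) (σ : G.V → Bool) : ℕ :=
  (Finset.univ.filter fun v => σ v = true).card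

/-- The degree of a vertex: the number of adjacent edges. -/
def degree (G : MGraph) (v : G.V) : ℕ :=
  (G.E.filter fun e => v ∈ e).card

/-- A singleton graph: one vertex, no edges. -/
def IsSingleton (G : MGraph) : Prop :=
  (∀ v w : G.V, v = w) ∧ G.E = 0

/-- Connectivity of a multigraph. -/
def Connected (G : MGraph) : Prop :=
  ∀ v w : G.V, Relation.ReflTransGen (fun a b => s(a, b) ∈ G.E) v w

/-- The underlying simple graph of a multigraph. -/
def toSimple (G : MGraph) : SimpleGraph G.V where
  Adj v w := v ≠ w ∧ s(v, w) ∈ G.E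
  symm := ⟨fun v w h => ⟨h.1.symm, by rw [Sym2.eq_swap]; exact h.2⟩⟩
  loopless := ⟨fun v h => h.1 rfl⟩

/-- A finite set of vertices is independent if no two of its members form an edge. -/
def IndepFinset (G : MGraph) (I : Finset G.V) : Prop :=
  ∀ v ∈ I, ∀ w ∈ I, s(v, w) ∉ G.E

end MGraph

/-- The conditioned independence polynomial `Z_G(λ, x)` of a multigraph with
marked vertices, evaluated in any commutative ring at `lam`. -/
def Zcond {k : ℕ} (R : Type) [CommRing R] (lam : R) (G : MGraph)
    (marks : Fin k → G.V) (x : Fin k → Bool) : R :=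
  ∑ σ : G.V → Bool,
    if G.Indep σ ∧ (∀ j, σ (marks j) = x j) then lam ^ G.ones σ else 0

/-- The (full) independence polynomial `Z_G(λ)`. -/
def Zfull (R : Type) [CommRing R] (lam : R) (G : MGraph) : R :=
  ∑ σ : G.V → Bool, if G.Indep σ then lam ^ G.ones σ else 0

/-- A multigraph with `k` marked vertices labeled `1, …, k`. -/
structure MarkedGraph (k : ℕ) where
  G : MGraph
  mark : Fin k → G.V

/-- `Z_G(λ, x)` for a marked graph. -/
def MarkedGraph.Z {k : ℕ} (R : Type) [CommRing R] (lam : R)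
    (A : MarkedGraph k) (x : Fin k → Bool) : R :=
  Zcond R lam A.G A.mark x

/-- The all-zeros tuple `(0, …, 0)`. -/
def zeroT (k : ℕ) : Fin k → Bool := fun _ => false

/-- The all-ones tuple `(1, …, 1)`. -/
def oneT (k : ℕ) : Fin k → Bool := fun _ => true

/-- The `j`-th standard basis tuple `e_j`. -/
def unitT {k : ℕ} (j : Fin k) : Fin k → Bool := fun i => if i = j then true else false

/-- The number of `1`-entries of a binary tuple. -/
def wt {k : ℕ} (x : Fin k → Bool) : ℕ := (Finset.univ.filter fun j => x j = true).card

/-- A set of vertices agrees with a binary tuple `x` when it contains the marked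
vertex labeled `j` iff `x j = 1`. -/
def Agrees {k : ℕ} (A : MarkedGraph k) (I : Finset A.G.V) (x : Fin k → Bool) : Prop :=
  ∀ j, A.mark j ∈ I ↔ x j = true

/-- A marked graph is maximally independent if for each binary tuple `x` there is a
unique independent set of maximal cardinality agreeing with `x`, and moreover
`#I(1,…,1) = #I(0,…,0) + k`. -/
def MaxIndependent {k : ℕ} (A : MarkedGraph k) : Prop :=
  (∀ x : Fin k → Bool, ∃ I : Finset A.G.V,
    (A.G.IndepFinset I ∧ Agrees A I x) ∧
    (∀ J, A.G.IndepFinset J ∧ Agrees A J x → J.card ≤ I.card) ∧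
    (∀ J, A.G.IndepFinset J ∧ Agrees A J x → J.card = I.card → J = I)) ∧
  (∀ I₁ I₀ : Finset A.G.V,
    ((A.G.IndepFinset I₁ ∧ Agrees A I₁ (oneT k)) ∧
      ∀ J, A.G.IndepFinset J ∧ Agrees A J (oneT k) → J.card ≤ I₁.card) →
    ((A.G.IndepFinset I₀ ∧ Agrees A I₀ (zeroT k)) ∧
      ∀ J, A.G.IndepFinset J ∧ Agrees A J (zeroT k) → J.card ≤ I₀.card) →
    I₁.card = I₀.card + k)

/-- Gluing data `(H, Σ, Υ, Φ)` with parameters `m, k`: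
a gluing scheme `H` (a labeled multi-hypergraph on `m` vertices, each vertex lying
in exactly one edge of each of the `k` labels), connecting graphs `Σ_e` with roots,
attaching maps `Υ_e`, and an injective labeling map `Φ`. -/
structure GluingData (m k : ℕ) where
  /-- index type for the edge multi-set of the gluing scheme `H` -/
  EIdx : Type
  efin : Fintype EIdx
  /-- the vertex set of an edge of `H` -/
  edge : EIdx → Finset (Fin m)
  edge_nonempty : ∀ e, (edge e).Nonempty
  /-- the label of an edge -/
  label : EIdx → Fin k
  /-- for each label `j`, the edges labeled `j` partition the vertex set of `H` -/
  mem_unique : ∀ (j : Fin k) (i : Fin m), ∃! e : EIdx, label e = j ∧ i ∈ edge e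
  /-- the connecting graphs `Σ_e` -/
  Sig : EIdx → MGraph
  Sig_nonempty : ∀ e, Nonempty (Sig e).V
  Sig_connected : ∀ e, (Sig e).Connected
  /-- the root of `Σ_e` -/
  root : (e : EIdx) → (Sig e).V
  /-- the attaching maps `Υ_e` (only their values on members of `e` matter) -/
  att : (e : EIdx) → Fin m → (Sig e).V
  /-- the labeling map `Φ` -/
  Phi : Fin k → EIdx
  Phi_inj : Function.Injective Phi

attribute [instance] GluingData.efin

namespace GluingData

variable {m k : ℕ}

/-- Disjoint union of the `m` copies of `A` and of the connecting graphs. -/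
def Carrier (D : GluingData m k) (A : MarkedGraph k) : Type :=
  (Fin m × A.G.V) ⊕ (Σ e : D.EIdx, (D.Sig e).V)

instance (D : GluingData m k) (A : MarkedGraph k) : Fintype (D.Carrier A) := by
  unfold Carrier; infer_instance

/-- The gluing identifications: the marked vertex labeled `ℓ(e)` of the copy `i ∈ e`
is identified with `Υ_e(w_i)` in `Σ_e`. -/
def glueRel (D : GluingData m k) (A : MarkedGraph k) :
    D.Carrier A → D.Carrier A → Prop := fun a b =>
  ∃ (e : D.EIdx) (i : Fin m), i ∈ D.edge e ∧
    a = Sum.inl (i, A.mark (D.label e)) ∧ b = Sum.inr ⟨e, D.att e i⟩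

/-- Vertices of `R(A)`. -/
def RV (D : GluingData m k) (A : MarkedGraph k) : Type := Quot (D.glueRel A)

instance (D : GluingData m k) (A : MarkedGraph k) : Fintype (D.RV A) :=
  Fintype.ofSurjective (Quot.mk _) (fun b => Quot.inductionOn b fun a => ⟨a, rfl⟩)

/-- The graph recursion `R` determined by the gluing data. -/
def RGraph (D : GluingData m k) (A : MarkedGraph k) : MarkedGraph k where
  G := { V := D.RV A
         fin := inferInstance
         E := (∑ i : Fin m, A.G.E.map (Sym2.map fun v =>
                 (Quot.mk (D.glueRel A) (Sum.inl (i, v)) : D.RV A))) +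
              ∑ e : D.EIdx, (D.Sig e).E.map (Sym2.map fun v =>
                 (Quot.mk (D.glueRel A) (Sum.inr ⟨e, v⟩) : D.RV A)) }
  mark := fun j =>
    (Quot.mk (D.glueRel A) (Sum.inr ⟨D.Phi j, D.root (D.Phi j)⟩) : D.RV A)

/-- `‖Y|_e‖`: the number of copies `i ∈ e` whose marked vertex labeled `ℓ(e)` is
assigned `1` by `Y`. -/
def normY (D : GluingData m k) (e : D.EIdx) (Y : Fin m → Fin k → Bool) : ℕ :=
  ((D.edge e).filter fun i => Y i (D.label e) = true).card

/-- `Z_{Σ_e}(λ, Y|_e, x|_e)`: the conditioned independence polynomial of the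
connecting graph `Σ_e`, given boundary conditions `Y` on the attached copies and
`x` at the root. -/
def ZE (D : GluingData m k) (R : Type) [CommRing R] (lam : R) (e : D.EIdx)
    (Y : Fin m → Fin k → Bool) (x : Fin k → Bool) : R :=
  ∑ σ : (D.Sig e).V → Bool,
    if (D.Sig e).Indep σ ∧ (∀ i ∈ D.edge e, σ (D.att e i) = Y i (D.label e)) ∧
        (∀ j, D.Phi j = e → σ (D.root e) = x j)
      then lam ^ (D.Sig e).ones σ else 0

/-- `Z_{Σ_e}(λ, Y_e, x|_e)` where `Y_e` is an assignment to the vertices of the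
single edge `e`. -/
def ZEdge (D : GluingData m k) (R : Type) [CommRing R] (lam : R) (e : D.EIdx)
    (Ye : {i // i ∈ D.edge e} → Bool) (x : Fin k → Bool) : R :=
  ∑ σ : (D.Sig e).V → Bool,
    if (D.Sig e).Indep σ ∧ (∀ i : {i // i ∈ D.edge e}, σ (D.att e i.1) = Ye i) ∧
        (∀ j, D.Phi j = e → σ (D.root e) = x j)
      then lam ^ (D.Sig e).ones σ else 0

/-- `‖Y_e‖`: the number of `1`-entries of an assignment to the vertices of `e`. -/
def normYe (D : GluingData m k) (e : D.EIdx) (Ye : {i // i ∈ D.edge e} → Bool) : ℕ :=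
  (Finset.univ.filter fun i => Ye i = true).card

/-- The label dynamics `Λ(j) = ℓ(Φ(j))`. -/
def Lam (D : GluingData m k) : Fin k → Fin k := fun j => D.label (D.Phi j)

/-- A label is periodic if it is periodic for `Λ`. -/
def PeriodicLabel (D : GluingData m k) (j : Fin k) : Prop :=
  ∃ p, 1 ≤ p ∧ D.Lam^[p] j = j

/-- A label is critical if `#Φ(j) ≥ 2`. -/
def CriticalLabel (D : GluingData m k) (j : Fin k) : Prop :=
  2 ≤ (D.edge (D.Phi j)).card

/-- Non-degenerate: no periodic critical labels. -/
def NonDegenerate (D : GluingData m k) : Prop :=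
  ∀ j, D.PeriodicLabel j → ¬D.CriticalLabel j

/-- Stable: non-degenerate and the connecting graph `Σ_{Φ(j)}` is a singleton for
every periodic label `j`. -/
def Stable (D : GluingData m k) : Prop :=
  D.NonDegenerate ∧ ∀ j, D.PeriodicLabel j → (D.Sig (D.Phi j)).IsSingleton

/-- The edge `Φ_n(j)` of the gluing scheme `H_n` of the `n`-th iterate of the graph
recursion, as a set of copies indexed by words of length `n`:
`Φ_n(j) = Φ(j) × Φ_{n−1}(Λ(j))`. -/
def PhiSet (D : GluingData m k) (n : ℕ) (j : Fin k) : Finset (Fin n → Fin m) :=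
  Finset.univ.filter fun w => ∀ t : Fin n, w t ∈ D.edge (D.Phi (D.Lam^[(t : ℕ)] j))

/-- Expanding: for some iterate `n ≥ 1` of the recursion, the edges `Φ_n(j)` are
pairwise disjoint subsets of `V(H_n)`. -/
def Expanding (D : GluingData m k) : Prop :=
  ∃ n, 1 ≤ n ∧ ∀ j ℓ : Fin k, j ≠ ℓ → Disjoint (D.PhiSet n j) (D.PhiSet n ℓ)

end GluingData

/-- The singleton graph `K_1`. -/
def K1 : MGraph := { V := PUnit, fin := inferInstance, E := 0 }

lemma K1_connected : K1.Connected := by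
  intro v w
  cases v; cases w
  exact Relation.ReflTransGen.refl

namespace GluingData

variable {m k : ℕ}

/-- The simplified gluing data: every connecting graph replaced by a singleton. -/
def simplified (D : GluingData m k) : GluingData m k :=
  { D with
    Sig := fun _ => K1
    Sig_nonempty := fun _ => ⟨PUnit.unit⟩
    Sig_connected := fun _ => K1_connected
    root := fun _ => PUnit.unit
    att := fun _ _ => PUnit.unit }

/-- The homogeneous polynomial map `F : ℂ^{2^k} → ℂ^{2^k}` induced by the recursion
(for a fixed parameter `lam`). -/
def Fmap (D : GluingData m k) (lam : ℂ) (z : (Fin k → Bool) → ℂ) :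
    (Fin k → Bool) → ℂ := fun x =>
  ∑ Y : Fin m → Fin k → Bool,
    (∏ i, z (Y i)) * ∏ e : D.EIdx, D.ZE ℂ lam e Y x / lam ^ D.normY e Y

end GluingData

/-- Index type for the affine chart `{(0,…,0)-coordinate ≠ 0}` of `ℙ^{2^k−1}`. -/
abbrev NZ (k : ℕ) := {x : Fin k → Bool // x ≠ zeroT k}

/-- The affine chart `ℂ^{2^k−1}` of `ℙ^{2^k−1}`. -/
abbrev CS (k : ℕ) := NZ k → ℂ

/-- `e_j` as a chart index. -/
def unitNZ {k : ℕ} (j : Fin k) : NZ k :=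
  ⟨unitT j, fun h => by
    have := congrFun h j
    simp [unitT, zeroT] at this⟩

/-- Extension of a chart point to a vector of homogeneous coordinates with
`(0,…,0)`-coordinate `1`. -/
def extendC {k : ℕ} (u : CS k) : (Fin k → Bool) → ℂ :=
  fun x => if h : x = zeroT k then 1 else u ⟨x, h⟩

/-- The invariant manifold `M_e` in the chart: `[x] = ∏_{j : x_j = 1} [e_j]`. -/
def MeC (k : ℕ) : Set (CS k) :=
  {u | ∀ x : NZ k, u x = ∏ j ∈ Finset.univ.filter (fun j => x.1 j = true), u (unitNZ j)}

/-- The rational map `F̂` on `ℙ^{2^k−1}` induced by `F`, written in the chart. -/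
def GluingData.Fc {m k : ℕ} (D : GluingData m k) (lam : ℂ) (u : CS k) : CS k := fun x =>
  D.Fmap lam (extendC u) x.1 / D.Fmap lam (extendC u) (zeroT k)

/-- An independent set in a simple graph. -/
def SimpleGraph.IsIndepSet' {V : Type} (G : SimpleGraph V) (s : Set V) : Prop :=
  s.Pairwise fun a b => ¬G.Adj a b

/-- The independence polynomial of a finite simple graph. -/
def indepPoly {V : Type} [Fintype V] [DecidableEq V] (G : SimpleGraph V) : Polynomial ℂ :=
  ∑ I : Finset V, if G.IsIndepSet' (↑I : Set V) then Polynomial.X ^ I.card else 0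

namespace Stmt16

variable {m k : ℕ}

/-- The unique edge with label `l` containing the copy `i`. -/
def eOf (D : GluingData m k) (l : Fin k) (i : Fin m) : D.EIdx := (D.mem_unique l i).choose

lemma eOf_label (D : GluingData m k) (l : Fin k) (i : Fin m) : D.label (eOf D l i) = l :=
  (D.mem_unique l i).choose_spec.1.1

lemma eOf_mem (D : GluingData m k) (l : Fin k) (i : Fin m) : i ∈ D.edge (eOf D l i) :=
  (D.mem_unique l i).choose_spec.1.2

lemma eOf_eq (D : GluingData m k) (e : D.EIdx) (i : Fin m) (h : i ∈ D.edge e) :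
    eOf D (D.label e) i = e :=
  ((D.mem_unique (D.label e) i).choose_spec.2 e ⟨rfl, h⟩).symm

/-- A conditioned independence polynomial with at least one configuration is nonzero. -/
lemma Z_ne_zero (A : MarkedGraph k) (x : Fin k → Bool)
    (h : ∃ σ : A.G.V → Bool, A.G.Indep σ ∧ ∀ j, σ (A.mark j) = x j) :
    A.Z (RatFunc ℂ) RatFunc.X x ≠ 0 := by
  obtain ⟨σ, hσ⟩ := h
  have h1 : A.Z (RatFunc ℂ) RatFunc.X x
      = algebraMap (Polynomial ℂ) (RatFunc ℂ) (Zcond (Polynomial ℂ) Polynomial.X A.G A.mark x) := by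
    unfold MarkedGraph.Z Zcond
    rw [map_sum]
    refine Finset.sum_congr rfl fun τ _ => ?_
    split_ifs <;> simp
  rw [h1]
  intro h0
  rw [map_eq_zero_iff _ (RatFunc.algebraMap_injective ℂ)] at h0
  have h2 := congrArg (Polynomial.eval 1) h0
  unfold Zcond at h2
  rw [Polynomial.eval_finsetSum] at h2
  have h3 : ∀ τ : A.G.V → Bool, Polynomial.eval (1 : ℂ)
      (if A.G.Indep τ ∧ (∀ j, τ (A.mark j) = x j) then
        (Polynomial.X : Polynomial ℂ) ^ A.G.ones τ else 0)
      = if A.G.Indep τ ∧ (∀ j, τ (A.mark j) = x j) then 1 else 0 := by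
    intro τ
    split_ifs <;> simp
  simp only [h3, Finset.sum_boole, Polynomial.eval_zero, Nat.cast_eq_zero,
    Finset.card_eq_zero] at h2
  have : σ ∈ (∅ : Finset (A.G.V → Bool)) := by
    rw [← h2]; simp only [Finset.mem_filter, Finset.mem_univ, true_and]; exact hσ
  simp at this

lemma Z_zero_ne (A : MarkedGraph k) : A.Z (RatFunc ℂ) RatFunc.X (zeroT k) ≠ 0 :=
  Z_ne_zero A _ ⟨fun _ => false, fun _ _ _ h => by simp at h, fun _ => rfl⟩

/-- On the invariant manifold, marks may only coincide at looped vertices. -/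
lemma marks_loop (A : MarkedGraph k)
    (hinv : ∀ x : Fin k → Bool,
      A.Z (RatFunc ℂ) RatFunc.X x / A.Z (RatFunc ℂ) RatFunc.X (zeroT k) =
        ∏ j ∈ Finset.univ.filter (fun j => x j = true),
          A.Z (RatFunc ℂ) RatFunc.X (unitT j) / A.Z (RatFunc ℂ) RatFunc.X (zeroT k))
    (a b : Fin k) (hab : A.mark a = A.mark b) (hne : a ≠ b) :
    s(A.mark a, A.mark a) ∈ A.G.E := by
  by_contra hl
  have h0 : A.Z (RatFunc ℂ) RatFunc.X (unitT a) = 0 := by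
    unfold MarkedGraph.Z Zcond
    refine Finset.sum_eq_zero fun σ _ => ?_
    rw [if_neg]
    rintro ⟨-, h⟩
    have h1 := h a
    have h2 := h b
    rw [hab, h2] at h1
    simp [unitT, hne.symm] at h1
  have h1 := hinv (fun c => decide (A.mark c = A.mark a))
  rw [Finset.prod_eq_zero (i := a) (by simp) (by rw [h0, zero_div])] at h1
  rw [div_eq_zero_iff] at h1
  rcases h1 with h1 | h1
  · refine Z_ne_zero A _ ⟨fun v => decide (v = A.mark a), ?_, fun _ => rfl⟩ h1
    rintro v w hvw ⟨h3, h4⟩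
    simp only [decide_eq_true_eq] at h3 h4
    subst h3; subst h4; exact hl hvw
  · exact Z_zero_ne A h1

lemma indep_inj (A : MarkedGraph k)
    (hA : ∀ a b : Fin k, A.mark a = A.mark b → a ≠ b → s(A.mark a, A.mark a) ∈ A.G.E)
    (s : A.G.V → Bool) (hs : A.G.Indep s) (a b : Fin k) (ha : s (A.mark a) = true)
    (hab : A.mark a = A.mark b) : a = b := by
  by_contra hne
  exact hs _ _ (hA a b hab hne) ⟨ha, ha⟩

/-- Number of attached copies assigned one. -/
def nrm (D : GluingData m k) (e : D.EIdx) (t : (D.Sig e).V → Bool) : ℕ :=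
  ((D.edge e).filter fun i => t (D.att e i) = true).card

def Compat (D : GluingData m k) (A : MarkedGraph k) (s : Fin m → A.G.V → Bool)
    (t : ∀ e, (D.Sig e).V → Bool) : Prop :=
  ∀ e, ∀ i ∈ D.edge e, s i (A.mark (D.label e)) = t e (D.att e i)

def mkL (D : GluingData m k) (A : MarkedGraph k) (i : Fin m) (v : A.G.V) : D.RV A :=
  Quot.mk (D.glueRel A) (Sum.inl (i, v))

def mkR (D : GluingData m k) (A : MarkedGraph k) (e : D.EIdx) (v : (D.Sig e).V) : D.RV A :=
  Quot.mk (D.glueRel A) (Sum.inr ⟨e, v⟩)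

lemma mkL_mark (D : GluingData m k) (A : MarkedGraph k) (e : D.EIdx) (i : Fin m)
    (h : i ∈ D.edge e) : mkL D A i (A.mark (D.label e)) = mkR D A e (D.att e i) :=
  Quot.sound ⟨e, i, h, rfl, rfl⟩

lemma RV_cases (D : GluingData m k) (A : MarkedGraph k) (q : D.RV A) :
    (∃ i v, q = mkL D A i v) ∨ ∃ e v, q = mkR D A e v := by
  induction q using Quot.inductionOn with
  | _ a =>
    rcases a with ⟨i, v⟩ | ⟨e, v⟩
    · exact Or.inl ⟨i, v, rfl⟩
    · exact Or.inr ⟨e, v, rfl⟩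

/-- The assignment on the glued graph. -/
def glue (D : GluingData m k) (A : MarkedGraph k) (s : Fin m → A.G.V → Bool)
    (t : ∀ e, (D.Sig e).V → Bool) (h : Compat D A s t) : D.RV A → Bool :=
  Quot.lift (fun a : D.Carrier A => Sum.elim (fun p : Fin m × A.G.V => s p.1 p.2)
      (fun q : (Σ e : D.EIdx, (D.Sig e).V) => t q.1 q.2) a)
    (by rintro a b ⟨e, i, hi, rfl, rfl⟩; exact h e i hi)

lemma mem_E (D : GluingData m k) (A : MarkedGraph k) (z : Sym2 (D.RV A)) :
    z ∈ (D.RGraph A).G.E ↔ (∃ i, ∃ y ∈ A.G.E, Sym2.map (mkL D A i) y = z) ∨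
      ∃ e, ∃ y ∈ (D.Sig e).E, Sym2.map (mkR D A e) y = z := by
  have h : z ∈ (D.RGraph A).G.E ↔ z ∈ ((∑ i : Fin m, A.G.E.map (Sym2.map (mkL D A i)) +
      ∑ e : D.EIdx, (D.Sig e).E.map (Sym2.map (mkR D A e)) : Multiset (Sym2 (D.RV A)))) := Iff.rfl
  rw [h]
  simp only [Multiset.mem_add, Multiset.mem_sum, Multiset.mem_map, Finset.mem_univ, true_and]

lemma indep_iff (D : GluingData m k) (A : MarkedGraph k) (σ : D.RV A → Bool) :
    (D.RGraph A).G.Indep σ ↔ (∀ i, A.G.Indep fun v => σ (mkL D A i v)) ∧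
      ∀ e, (D.Sig e).Indep fun v => σ (mkR D A e v) := by
  constructor
  · intro h
    refine ⟨fun i v w hvw => ?_, fun e v w hvw => ?_⟩
    · exact h (mkL D A i v) (mkL D A i w) ((mem_E D A _).2 (Or.inl ⟨i, _, hvw, rfl⟩))
    · exact h (mkR D A e v) (mkR D A e w) ((mem_E D A _).2 (Or.inr ⟨e, _, hvw, rfl⟩))
  · rintro ⟨h1, h2⟩ v w hvw
    rcases (mem_E D A _).1 hvw with ⟨i, y, hy, he⟩ | ⟨e, y, hy, he⟩
    · induction y using Sym2.ind with
      | _ a b =>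
        rw [Sym2.map_mk] at he
        have := h1 i a b hy
        rcases Sym2.eq_iff.1 he with ⟨rfl, rfl⟩ | ⟨rfl, rfl⟩
        · exact this
        · exact fun h => this h.symm
    · induction y using Sym2.ind with
      | _ a b =>
        rw [Sym2.map_mk] at he
        have := h2 e a b hy
        rcases Sym2.eq_iff.1 he with ⟨rfl, rfl⟩ | ⟨rfl, rfl⟩
        · exact this
        · exact fun h => this h.symm

def cL (D : GluingData m k) (A : MarkedGraph k) (i : Fin m) (v : A.G.V) : D.Carrier A :=
  Sum.inl (i, v)

def cR (D : GluingData m k) (A : MarkedGraph k) (e : D.EIdx) (v : (D.Sig e).V) : D.Carrier A :=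
  Sum.inr ⟨e, v⟩

/-- Normal form of a left carrier element. -/
def nfL (D : GluingData m k) (A : MarkedGraph k) (i : Fin m) (v : A.G.V) : D.Carrier A :=
  if h : ∃ l, A.mark l = v then
    cR D A (eOf D h.choose i) (D.att (eOf D h.choose i) i) else cL D A i v

/-- Normal form of a carrier element. -/
def nf (D : GluingData m k) (A : MarkedGraph k) : D.Carrier A → D.Carrier A
  | Sum.inl p => nfL D A p.1 p.2
  | Sum.inr q => cR D A q.1 q.2

/-- Number of ones on the glued graph. -/
def onesR (D : GluingData m k) (A : MarkedGraph k) (σ : D.RV A → Bool) : ℕ :=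
  (Finset.univ.filter fun q : D.RV A => σ q = true).card

lemma ones_eq (D : GluingData m k) (A : MarkedGraph k)
    (hA : ∀ a b : Fin k, A.mark a = A.mark b → a ≠ b → s(A.mark a, A.mark a) ∈ A.G.E)
    (σ : D.RV A → Bool) (hσ : ∀ i, A.G.Indep fun v => σ (mkL D A i v)) :
    onesR D A σ + ∑ e, nrm D e (fun v => σ (mkR D A e v)) =
      (∑ i, A.G.ones fun v => σ (mkL D A i v)) + ∑ e, (D.Sig e).ones fun v => σ (mkR D A e v) := by
  set U : Finset (Fin m × A.G.V) := Finset.univ.filter fun p => σ (mkL D A p.1 p.2) = true with hU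
  set M : Finset (Fin m × A.G.V) := U.filter fun p => ∃ l, A.mark l = p.2 with hM
  set N : Finset (Fin m × A.G.V) := U.filter fun p => ¬ ∃ l, A.mark l = p.2 with hN
  set T : Finset (Σ e : D.EIdx, (D.Sig e).V) :=
    Finset.univ.filter fun q => σ (mkR D A q.1 q.2) = true with hT
  have hUc : (∑ i, A.G.ones fun v => σ (mkL D A i v)) = U.card := by
    unfold MGraph.ones
    simp only [hU, Finset.card_filter]
    rw [Fintype.sum_prod_type]
  have hTc : (∑ e, (D.Sig e).ones fun v => σ (mkR D A e v)) = T.card := by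
    unfold MGraph.ones
    simp only [hT, Finset.card_filter]
    rw [Fintype.sum_sigma]
  have hMN : M.card + N.card = U.card := Finset.card_filter_add_card_filter_not _
  have hMc : ∑ e, nrm D e (fun v => σ (mkR D A e v)) = M.card := by
    unfold nrm
    rw [← Finset.card_sigma]
    refine Finset.card_bij (fun q _ => (q.2, A.mark (D.label q.1))) ?_ ?_ ?_
    · rintro ⟨e, i⟩ h
      simp only [Finset.mem_sigma, Finset.mem_univ, true_and, Finset.mem_filter] at h
      simp only [hM, hU, Finset.mem_filter, Finset.mem_univ, true_and]
      exact ⟨by rw [mkL_mark D A e i h.1]; exact h.2, _, rfl⟩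
    · rintro ⟨e, i⟩ h ⟨e', i'⟩ h' heq
      simp only [Finset.mem_sigma, Finset.mem_univ, true_and, Finset.mem_filter] at h h'
      simp only [Prod.mk.injEq] at heq
      obtain ⟨rfl, heq⟩ := heq
      have hl : D.label e = D.label e' := by
        refine indep_inj A hA _ (hσ i) _ _ ?_ heq
        show σ (mkL D A i (A.mark (D.label e))) = true
        rw [mkL_mark D A e i h.1]; exact h.2
      have : e = e' := by rw [← eOf_eq D e i h.1, ← eOf_eq D e' i h'.1, hl]
      subst this; rfl
    · rintro ⟨i, v⟩ h
      simp only [hM, hU, Finset.mem_filter, Finset.mem_univ, true_and] at h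
      obtain ⟨h1, l, rfl⟩ := h
      refine ⟨⟨eOf D l i, i⟩, ?_, ?_⟩
      · simp only [Finset.mem_sigma, Finset.mem_univ, true_and, Finset.mem_filter]
        refine ⟨eOf_mem D l i, ?_⟩
        rw [← mkL_mark D A _ i (eOf_mem D l i), eOf_label]; exact h1
      · simp only [eOf_label]
  have hones : onesR D A σ = N.card + T.card := by
    rw [← Finset.card_disjSum]
    symm
    unfold onesR
    refine Finset.card_bij (fun a _ => (Quot.mk (D.glueRel A) a : D.RV A)) ?_ ?_ ?_
    · rintro (⟨i, v⟩ | ⟨e, v⟩) h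
      · simp only [Finset.inl_mem_disjSum, hN, hU, Finset.mem_filter, Finset.mem_univ,
          true_and] at h
        show mkL D A i v ∈ Finset.univ.filter fun q : D.RV A => σ q = true
        simp only [Finset.mem_filter, Finset.mem_univ, true_and]
        exact h.1
      · simp only [Finset.inr_mem_disjSum, hT, Finset.mem_filter, Finset.mem_univ,
          true_and] at h
        show mkR D A e v ∈ Finset.univ.filter fun q : D.RV A => σ q = true
        simp only [Finset.mem_filter, Finset.mem_univ, true_and]
        exact h
    · have key : ∀ (e : D.EIdx) (i : Fin m), i ∈ D.edge e →
          (if σ (mkL D A i (A.mark (D.label e))) = true then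
            some (nfL D A i (A.mark (D.label e))) else none) =
          (if σ (mkR D A e (D.att e i)) = true then some (cR D A e (D.att e i)) else none) := by
        intro e i hi
        rw [mkL_mark D A e i hi]
        split_ifs with htr
        · congr 1
          have hex : ∃ l, A.mark l = A.mark (D.label e) := ⟨_, rfl⟩
          have hch : D.label e = hex.choose := by
            refine indep_inj A hA _ (hσ i) _ _ ?_ hex.choose_spec.symm
            show σ (mkL D A i _) = true
            rw [mkL_mark D A e i hi]; exact htr
          have he : eOf D hex.choose i = e := by rw [← hch]; exact eOf_eq D e i hi
          unfold nfL
          rw [dif_pos hex, he]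
        · rfl
      let f : D.RV A → Option (D.Carrier A) := Quot.lift
        (fun a => if σ (Quot.mk _ a) = true then some (nf D A a) else none) (by
          rintro a b ⟨e, i, hi, rfl, rfl⟩
          exact key e i hi)
      have hf : ∀ a ∈ N.disjSum T, f (Quot.mk _ a) = some a := by
        rintro (⟨i, v⟩ | ⟨e, v⟩) h
        · simp only [Finset.inl_mem_disjSum, hN, hU, Finset.mem_filter, Finset.mem_univ,
            true_and] at h
          show (if σ (mkL D A i v) = true then some (nfL D A i v) else none) =
            some (cL D A i v)
          rw [if_pos h.1]
          unfold nfL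
          rw [dif_neg h.2]
        · simp only [Finset.inr_mem_disjSum, hT, Finset.mem_filter, Finset.mem_univ,
            true_and] at h
          show (if σ (mkR D A e v) = true then some (cR D A e v) else none) =
            some (cR D A e v)
          rw [if_pos h]
      intro a ha b hb hab
      have h1 := hf a ha
      have h2 := hf b hb
      have hab' : (Quot.mk (D.glueRel A) a : D.RV A) = Quot.mk (D.glueRel A) b := hab
      rw [hab', h2] at h1
      exact (Option.some.inj h1).symm
    · intro q hq
      have hq' : σ q = true := by
        simpa only [Finset.mem_filter, Finset.mem_univ, true_and] using hq
      rcases RV_cases D A q with ⟨i, v, rfl⟩ | ⟨e, v, rfl⟩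
      · by_cases hv : ∃ l, A.mark l = v
        · obtain ⟨l, rfl⟩ := hv
          have hm := mkL_mark D A _ i (eOf_mem D l i)
          rw [eOf_label] at hm
          rw [hm] at hq' ⊢
          refine ⟨Sum.inr ⟨eOf D l i, D.att (eOf D l i) i⟩, ?_, rfl⟩
          simp only [Finset.inr_mem_disjSum, hT, Finset.mem_filter, Finset.mem_univ, true_and]
          exact hq'
        · refine ⟨Sum.inl (i, v), ?_, rfl⟩
          simp only [Finset.inl_mem_disjSum, hN, hU, Finset.mem_filter, Finset.mem_univ, true_and]
          exact ⟨hq', hv⟩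
      · refine ⟨Sum.inr ⟨e, v⟩, ?_, rfl⟩
        simp only [Finset.inr_mem_disjSum, hT, Finset.mem_filter, Finset.mem_univ, true_and]
        exact hq'
  rw [hones, hMc, hUc, hTc]
  omega

/-- Local weight of a connecting graph. -/
def gw (D : GluingData m k) (x : Fin k → Bool) (e : D.EIdx) (t : (D.Sig e).V → Bool) :
    RatFunc ℂ :=
  if (D.Sig e).Indep t ∧ (∀ j, D.Phi j = e → t (D.root e) = x j) then
    RatFunc.X ^ (D.Sig e).ones t / RatFunc.X ^ nrm D e t else 0

/-- The boundary values seen by the copy `i`. -/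
def bd (D : GluingData m k) (t : ∀ e, (D.Sig e).V → Bool) (i : Fin m) : Fin k → Bool :=
  fun l => t (eOf D l i) (D.att (eOf D l i) i)

lemma compat_iff (D : GluingData m k) (A : MarkedGraph k) (s : Fin m → A.G.V → Bool)
    (t : ∀ e, (D.Sig e).V → Bool) :
    Compat D A s t ↔ ∀ i l, s i (A.mark l) = bd D t i l := by
  constructor
  · intro h i l
    have := h _ i (eOf_mem D l i)
    rw [eOf_label] at this
    exact this
  · intro h e i hi
    have := h i (D.label e)
    unfold bd at this
    rw [eOf_eq D e i hi] at this
    exact this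

lemma prod_ite_all {ι : Type} [Fintype ι] (p : ι → Prop) [DecidablePred p]
    [Decidable (∀ i, p i)] (f : ι → RatFunc ℂ) :
    (∏ i, if p i then f i else 0) = if ∀ i, p i then ∏ i, f i else 0 := by
  split_ifs with h
  · exact Finset.prod_congr rfl fun i _ => if_pos (h i)
  · push Not at h
    obtain ⟨i, hi⟩ := h
    exact Finset.prod_eq_zero (Finset.mem_univ i) (if_neg hi)

lemma Z_R (D : GluingData m k) (A : MarkedGraph k) (x : Fin k → Bool) :
    (D.RGraph A).Z (RatFunc ℂ) RatFunc.X x = ∑ σ : D.RV A → Bool,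
      if ((∀ i, A.G.Indep fun v => σ (mkL D A i v)) ∧
          ∀ e, (D.Sig e).Indep fun v => σ (mkR D A e v)) ∧
        (∀ e, ∀ j, D.Phi j = e → σ (mkR D A e (D.root e)) = x j)
      then (RatFunc.X : RatFunc ℂ) ^ onesR D A σ else 0 := by
  unfold MarkedGraph.Z Zcond
  refine Fintype.sum_equiv (Equiv.refl _) _ _ fun σ => ?_
  have hroot : (∀ j, σ ((D.RGraph A).mark j) = x j) ↔
      ∀ e, ∀ j, D.Phi j = e → σ (mkR D A e (D.root e)) = x j := by
    constructor
    · rintro h e j rfl; exact h j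
    · intro h j; exact h _ j rfl
  exact if_congr (and_congr (indep_iff D A σ) hroot) rfl rfl

/-- The recursion formula. -/
lemma Z_rec (D : GluingData m k) (A : MarkedGraph k)
    (hA : ∀ a b : Fin k, A.mark a = A.mark b → a ≠ b → s(A.mark a, A.mark a) ∈ A.G.E)
    (x : Fin k → Bool) :
    (D.RGraph A).Z (RatFunc ℂ) RatFunc.X x =
      ∑ t : (∀ e, (D.Sig e).V → Bool), (∏ e, gw D x e (t e)) *
        ∏ i, A.Z (RatFunc ℂ) RatFunc.X (bd D t i) := by
  have hX : (RatFunc.X : RatFunc ℂ) ≠ 0 := RatFunc.X_ne_zero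
  have hR : (∑ t : (∀ e, (D.Sig e).V → Bool), (∏ e, gw D x e (t e)) *
        ∏ i, A.Z (RatFunc ℂ) RatFunc.X (bd D t i)) =
      ∑ p ∈ (Finset.univ : Finset ((∀ e, (D.Sig e).V → Bool) × (Fin m → A.G.V → Bool))).filter
          (fun p => Compat D A p.2 p.1),
        (∏ e, gw D x e (p.1 e)) *
          ∏ i, if A.G.Indep (p.2 i) then (RatFunc.X : RatFunc ℂ) ^ A.G.ones (p.2 i) else 0 := by
    rw [Finset.sum_filter, Fintype.sum_prod_type]
    refine Finset.sum_congr rfl fun t _ => ?_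
    unfold MarkedGraph.Z Zcond
    rw [Finset.prod_univ_sum, Fintype.piFinset_univ, Finset.mul_sum]
    refine Finset.sum_congr rfl fun s _ => ?_
    rw [prod_ite_all, prod_ite_all]
    simp only [compat_iff, forall_and]
    by_cases h1 : ∀ i, A.G.Indep (s i) <;>
      by_cases h2 : ∀ i l, s i (A.mark l) = bd D t i l <;> simp [h1, h2]
  rw [hR, Z_R]
  refine Finset.sum_nbij' (M := RatFunc ℂ)
    (fun σ => (fun e v => σ (mkR D A e v), fun i v => σ (mkL D A i v)))
    (fun p => if h : Compat D A p.2 p.1 then glue D A p.2 p.1 h else fun _ => false)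
    ?_ ?_ ?_ ?_ ?_
  · intro σ _
    simp only [Finset.mem_filter, Finset.mem_univ, true_and]
    intro e i hi
    show σ _ = σ _
    rw [mkL_mark D A e i hi]
  · intro p _; exact Finset.mem_univ _
  · intro σ _
    have hc : Compat D A (fun i v => σ (mkL D A i v)) (fun e v => σ (mkR D A e v)) := by
      intro e i hi
      show σ _ = σ _
      rw [mkL_mark D A e i hi]
    show (if h : Compat D A (fun i v => σ (mkL D A i v)) (fun e v => σ (mkR D A e v))
      then glue D A _ _ h else fun _ => false) = σ
    rw [dif_pos hc]
    funext q
    rcases RV_cases D A q with ⟨i, v, rfl⟩ | ⟨e, v, rfl⟩ <;> rfl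
  · rintro ⟨t, s⟩ hp
    have hc : Compat D A s t := (Finset.mem_filter.1 hp).2
    simp only
    rw [dif_pos hc]
    rfl
  · intro σ _
    unfold gw
    rw [prod_ite_all, prod_ite_all]
    by_cases h1 : (∀ i, A.G.Indep fun v => σ (mkL D A i v))
    · by_cases h2 : ∀ e, (D.Sig e).Indep (fun v => σ (mkR D A e v)) ∧
          ∀ j, D.Phi j = e → σ (mkR D A e (D.root e)) = x j
      · rw [if_pos h1, if_pos h2, if_pos ⟨⟨h1, fun e => (h2 e).1⟩,
          fun e => (h2 e).2⟩]
        rw [Finset.prod_div_distrib, Finset.prod_pow_eq_pow_sum, Finset.prod_pow_eq_pow_sum,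
          Finset.prod_pow_eq_pow_sum, div_mul_eq_mul_div, eq_div_iff (pow_ne_zero _ hX),
          ← pow_add, ← pow_add, ones_eq D A hA σ h1, add_comm]
      · rw [if_neg h2, zero_mul, if_neg]
        rintro ⟨h3, h4⟩
        exact h2 fun e => ⟨h3.2 e, h4 e⟩
    · rw [if_neg h1, mul_zero, if_neg]
      rintro ⟨h3, -⟩
      exact h1 h3.1

/-- The edge sum. -/
def Se (D : GluingData m k) (q : Fin k → RatFunc ℂ) (x : Fin k → Bool) (e : D.EIdx) : RatFunc ℂ :=
  ∑ t : (D.Sig e).V → Bool, gw D x e t * q (D.label e) ^ nrm D e t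

lemma prod_bd (D : GluingData m k) (q : Fin k → RatFunc ℂ) (t : ∀ e, (D.Sig e).V → Bool) :
    (∏ i, ∏ l ∈ Finset.univ.filter (fun l => bd D t i l = true), q l) =
      ∏ e, q (D.label e) ^ nrm D e (t e) := by
  have h1 : ∀ e, q (D.label e) ^ nrm D e (t e) =
      ∏ i ∈ (D.edge e).filter (fun i => t e (D.att e i) = true), q (D.label e) := by
    intro e; rw [Finset.prod_const]; rfl
  simp only [h1]
  rw [Finset.prod_sigma', Finset.prod_sigma']
  refine Finset.prod_nbij' (fun p => ⟨eOf D p.2 p.1, p.1⟩) (fun p => ⟨p.2, D.label p.1⟩)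
    ?_ ?_ ?_ ?_ ?_
  · rintro ⟨i, l⟩ h
    simp only [Finset.mem_sigma, Finset.mem_univ, true_and, Finset.mem_filter] at h ⊢
    exact ⟨eOf_mem D l i, h⟩
  · rintro ⟨e, i⟩ h
    simp only [Finset.mem_sigma, Finset.mem_univ, true_and, Finset.mem_filter] at h ⊢
    unfold bd
    rw [eOf_eq D e i h.1]; exact h.2
  · rintro ⟨i, l⟩ h
    simp only [eOf_label]
  · rintro ⟨e, i⟩ h
    simp only [Finset.mem_sigma, Finset.mem_univ, true_and, Finset.mem_filter] at h
    simp only [eOf_eq D e i h.1]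
  · rintro ⟨i, l⟩ h
    simp only [eOf_label]

lemma Z_factor (D : GluingData m k) (A : MarkedGraph k)
    (hinv : ∀ x : Fin k → Bool,
      A.Z (RatFunc ℂ) RatFunc.X x / A.Z (RatFunc ℂ) RatFunc.X (zeroT k) =
        ∏ j ∈ Finset.univ.filter (fun j => x j = true),
          A.Z (RatFunc ℂ) RatFunc.X (unitT j) / A.Z (RatFunc ℂ) RatFunc.X (zeroT k))
    (x : Fin k → Bool) :
    (D.RGraph A).Z (RatFunc ℂ) RatFunc.X x =
      A.Z (RatFunc ℂ) RatFunc.X (zeroT k) ^ m *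
        ∏ e, Se D (fun l => A.Z (RatFunc ℂ) RatFunc.X (unitT l) /
          A.Z (RatFunc ℂ) RatFunc.X (zeroT k)) x e := by
  have hz := Z_zero_ne A
  rw [Z_rec D A (marks_loop A hinv) x]
  unfold Se
  rw [Finset.prod_univ_sum, Fintype.piFinset_univ, Finset.mul_sum]
  refine Finset.sum_congr rfl fun t _ => ?_
  have h1 : ∀ i, A.Z (RatFunc ℂ) RatFunc.X (bd D t i) =
      A.Z (RatFunc ℂ) RatFunc.X (zeroT k) *
        ∏ l ∈ Finset.univ.filter (fun l => bd D t i l = true),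
          (A.Z (RatFunc ℂ) RatFunc.X (unitT l) / A.Z (RatFunc ℂ) RatFunc.X (zeroT k)) := by
    intro i
    rw [← hinv, mul_div_cancel₀ _ hz]
  simp only [h1]
  rw [Finset.prod_mul_distrib, Finset.prod_mul_distrib, Finset.prod_const, Finset.card_univ,
    Fintype.card_fin,
    prod_bd D (fun l => A.Z (RatFunc ℂ) RatFunc.X (unitT l) /
          A.Z (RatFunc ℂ) RatFunc.X (zeroT k)) t]
  ring

lemma Se_eq (D : GluingData m k) (q : Fin k → RatFunc ℂ) (x : Fin k → Bool) (e : D.EIdx) :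
    (∑ Ye : {i // i ∈ D.edge e} → Bool, q (D.label e) ^ D.normYe e Ye *
      (D.ZEdge (RatFunc ℂ) RatFunc.X e Ye x / RatFunc.X ^ D.normYe e Ye)) = Se D q x e := by
  unfold Se GluingData.ZEdge
  simp only [Finset.sum_div, Finset.mul_sum]
  rw [Finset.sum_comm]
  refine Finset.sum_congr rfl fun t _ => ?_
  rw [Finset.sum_eq_single (fun i : {i // i ∈ D.edge e} => t (D.att e i.1))]
  · have hn : D.normYe e (fun i : {i // i ∈ D.edge e} => t (D.att e i.1)) = nrm D e t := by
      unfold GluingData.normYe nrm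
      rw [Finset.card_filter, Finset.card_filter,
        ← Finset.sum_coe_sort (D.edge e) (fun i => if t (D.att e i) = true then 1 else 0)]
    rw [hn]
    unfold gw
    by_cases h : (D.Sig e).Indep t ∧ ∀ j, D.Phi j = e → t (D.root e) = x j
    · rw [if_pos h, if_pos ⟨h.1, fun _ => rfl, h.2⟩]; ring
    · rw [if_neg h, if_neg (fun h' => h ⟨h'.1, h'.2.2⟩)]; simp
  · intro Y _ hY
    rw [if_neg]
    · simp
    · rintro ⟨-, h, -⟩
      exact hY (funext fun i => (h i).symm)
  · intro h; exact absurd (Finset.mem_univ _) h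

lemma Se_congr (D : GluingData m k) (q : Fin k → RatFunc ℂ) (j : Fin k) (e : D.EIdx)
    (he : e ≠ D.Phi j) : Se D q (unitT j) e = Se D q (zeroT k) e := by
  unfold Se gw
  have : ∀ j', D.Phi j' = e → unitT j j' = zeroT k j' := by
    intro j' h
    have : j' ≠ j := by rintro rfl; exact he h.symm
    simp [unitT, zeroT, this]
  refine Finset.sum_congr rfl fun t _ => ?_
  have h2 : (∀ j', D.Phi j' = e → t (D.root e) = unitT j j') ↔
      (∀ j', D.Phi j' = e → t (D.root e) = zeroT k j') :=
    forall_congr' fun j' => forall_congr' fun h => by rw [this j' h]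
  simp only [h2]

end Stmt16

-- STATEMENT 16
theorem stmt16 {m k : ℕ} (hm : 2 ≤ m) (hk : 2 ≤ k) (D : GluingData m k)
    (Gs : ℕ → MarkedGraph k) (hrec : ∀ n, Gs (n + 1) = D.RGraph (Gs n)) (n : ℕ)
    (hinv : ∀ x : Fin k → Bool,
      (Gs n).Z (RatFunc ℂ) RatFunc.X x / (Gs n).Z (RatFunc ℂ) RatFunc.X (zeroT k) =
        ∏ j ∈ Finset.univ.filter (fun j => x j = true),
          (Gs n).Z (RatFunc ℂ) RatFunc.X (unitT j) /
            (Gs n).Z (RatFunc ℂ) RatFunc.X (zeroT k))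
    (j : Fin k) :
    (Gs (n + 1)).Z (RatFunc ℂ) RatFunc.X (unitT j) /
        (Gs (n + 1)).Z (RatFunc ℂ) RatFunc.X (zeroT k) =
      (∑ Ye : {i // i ∈ D.edge (D.Phi j)} → Bool,
          ((Gs n).Z (RatFunc ℂ) RatFunc.X (unitT (D.Lam j)) /
              (Gs n).Z (RatFunc ℂ) RatFunc.X (zeroT k)) ^ D.normYe (D.Phi j) Ye *
            (D.ZEdge (RatFunc ℂ) RatFunc.X (D.Phi j) Ye (unitT j) /
              RatFunc.X ^ D.normYe (D.Phi j) Ye)) /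
      (∑ Ye : {i // i ∈ D.edge (D.Phi j)} → Bool,
          ((Gs n).Z (RatFunc ℂ) RatFunc.X (unitT (D.Lam j)) /
              (Gs n).Z (RatFunc ℂ) RatFunc.X (zeroT k)) ^ D.normYe (D.Phi j) Ye *
            (D.ZEdge (RatFunc ℂ) RatFunc.X (D.Phi j) Ye (zeroT k) /
              RatFunc.X ^ D.normYe (D.Phi j) Ye)) := by
  have hnz := Stmt16.Z_zero_ne (Gs (n + 1))
  rw [hrec n] at hnz ⊢
  rw [Stmt16.Z_factor D (Gs n) hinv] at hnz
  rw [Stmt16.Z_factor D (Gs n) hinv, Stmt16.Z_factor D (Gs n) hinv]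
  unfold GluingData.Lam
  set q : Fin k → RatFunc ℂ := fun l => (Gs n).Z (RatFunc ℂ) RatFunc.X (unitT l) /
    (Gs n).Z (RatFunc ℂ) RatFunc.X (zeroT k) with hq
  have e1 := Stmt16.Se_eq D q (unitT j) (D.Phi j)
  have e2 := Stmt16.Se_eq D q (zeroT k) (D.Phi j)
  simp only [hq] at e1 e2
  rw [e1, e2]
  have hp := Finset.mul_prod_erase (Finset.univ : Finset D.EIdx)
    (fun e => Stmt16.Se D q (unitT j) e) (Finset.mem_univ (D.Phi j))
  have hp2 := Finset.mul_prod_erase (Finset.univ : Finset D.EIdx)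
    (fun e => Stmt16.Se D q (zeroT k) e) (Finset.mem_univ (D.Phi j))
  have hc : ∏ e ∈ (Finset.univ : Finset D.EIdx).erase (D.Phi j), Stmt16.Se D q (unitT j) e =
      ∏ e ∈ (Finset.univ : Finset D.EIdx).erase (D.Phi j), Stmt16.Se D q (zeroT k) e :=
    Finset.prod_congr rfl fun e he => Stmt16.Se_congr D q j e (Finset.ne_of_mem_erase he)
  rw [hc] at hp
  rw [← hp2] at hnz
  rw [← hp, ← hp2, mul_div_mul_left _ _ (left_ne_zero_of_mul hnz),
    mul_div_mul_right _ _ (right_ne_zero_of_mul (right_ne_zero_of_mul hnz))]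

end
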